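/- Let 1 < p < q < p*. For every c > 0, the infimum of μ_{p,q}(Ω) over all open bounded convex sets Ω ⊂ ℝ^N with diam(Ω) ≤ c equals 0; in particular, for every ε > 0 there exists an open bounded convex Ω with diam(Ω) = c and 0 < μ_{p,q}(Ω) < ε, so no lower bound for μ_{p,q} in terms of the diameter alone is possible when q > p. -/

import Mathlib

open MeasureTheory Metric Set Real

noncomputable section

/-- The Rayleigh quotient `(∫_Ω |∇v|^p) / (∫_Ω |v|^q)^(p/q)`, where the gradient is
understood as the (a.e. defined) Fréchet derivative. -/
def rayleighQuot {N : ℕ} (p q : ℝ) (Ω : Set (EuclideanSpace ℝ (Fin N)))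
    (v : EuclideanSpace ℝ (Fin N) → ℝ) : ℝ :=
  (∫ x in Ω, ‖fderiv ℝ v x‖ ^ p) / (∫ x in Ω, |v x| ^ q) ^ (p / q)

/-- The first (generalized) Dirichlet eigenvalue `λ_{p,q}(Ω)`: infimum of the Rayleigh
quotient over nontrivial smooth functions compactly supported in `Ω`. -/
def lambdaPQ {N : ℕ} (p q : ℝ) (Ω : Set (EuclideanSpace ℝ (Fin N))) : ℝ :=
  sInf { R : ℝ | ∃ v : EuclideanSpace ℝ (Fin N) → ℝ,
    ContDiff ℝ (⊤ : ℕ∞) v ∧ HasCompactSupport v ∧ tsupport v ⊆ Ω ∧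
    (∃ x ∈ Ω, v x ≠ 0) ∧ R = rayleighQuot p q Ω v }

/-- The first nontrivial (generalized) Neumann eigenvalue `μ_{p,q}(Ω)`: infimum of the
Rayleigh quotient over nontrivial Lipschitz functions on the closure of `Ω` satisfying
the constraint `∫_Ω |v|^(q-2) v = 0`. -/
def muPQ {N : ℕ} (p q : ℝ) (Ω : Set (EuclideanSpace ℝ (Fin N))) : ℝ :=
  sInf { R : ℝ | ∃ v : EuclideanSpace ℝ (Fin N) → ℝ, ∃ K : NNReal,
    LipschitzOnWith K v (closure Ω) ∧ (∃ x ∈ Ω, v x ≠ 0) ∧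
    (∫ x in Ω, |v x| ^ (q - 2) * v x) = 0 ∧ R = rayleighQuot p q Ω v }

/-- `q` is below the critical Sobolev exponent `p* = Np/(N-p)` (with `p* = ∞` if `p ≥ N`). -/
def ltCritical (N : ℕ) (p q : ℝ) : Prop := p < N → q < N * p / (N - p)

end

/-!
The coordinate function `x i` is an admissible test function on every set symmetric about the
origin. Squeezing a ball in all the other coordinate directions by a linear map `T` leaves the
diameter unchanged and multiplies the Rayleigh quotient of `x i` by `|det T| ^ (1 - p / q)`, which
tends to `0` because `p < q`.

That `μ_{p,q}` is nevertheless positive is a Poincaré–Sobolev inequality: the deviation of `v` from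
its mean at `x` is at most a constant times the average of `‖∇v‖` over the points
`(1 - t) x + t y`, and for fixed `t` this average over `y` maps `L^p` to `L^q` with norm of order
`t ^ (-N (1 / p - 1 / q))`, which is integrable on `(0, 1)` exactly when `q` is subcritical.
The mean can be dropped because, when `∫ |v| ^ (q - 2) v = 0`, the function `c ↦ ∫ |v - c| ^ q` is
minimal at `c = 0`.
-/

open Filter Module Topology
open scoped ENNReal NNReal

section Integral

variable {α β : Type*} [MeasurableSpace α] [MeasurableSpace β] {μ : Measure α} {ν : Measure β}

theorem lintegral_rpow_le_weighted {q : ℝ} (hq : 1 ≤ q) {f w : α → ℝ≥0∞}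
    (hf : AEMeasurable f μ) (hw : AEMeasurable w μ) (hw_zero : ∀ᵐ a ∂μ, w a ≠ 0)
    (hw_top : ∀ᵐ a ∂μ, w a ≠ ∞) :
    (∫⁻ a, f a ∂μ) ^ q ≤ (∫⁻ a, w a ∂μ) ^ (q - 1) * ∫⁻ a, w a ^ (1 - q) * f a ^ q ∂μ := by
  have hq_pos : 0 < q := by linarith
  have hq_inv : q⁻¹ ≤ 1 := inv_le_one_of_one_le₀ hq
  have factor : ∀ᵐ a ∂μ, f a = w a ^ (1 - q⁻¹) * (w a ^ (1 - q) * f a ^ q) ^ q⁻¹ := by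
    filter_upwards [hw_zero, hw_top] with a h0 ht
    rw [ENNReal.mul_rpow_of_nonneg _ _ (by positivity), ← ENNReal.rpow_mul, ← ENNReal.rpow_mul,
      ← mul_assoc, ← ENNReal.rpow_add _ _ h0 ht, mul_inv_cancel₀ hq_pos.ne', ENNReal.rpow_one]
    have : 1 - q⁻¹ + (1 - q) * q⁻¹ = 0 := by field_simp; ring
    rw [this, ENNReal.rpow_zero, one_mul]
  calc (∫⁻ a, f a ∂μ) ^ q
      = (∫⁻ a, w a ^ (1 - q⁻¹) * (w a ^ (1 - q) * f a ^ q) ^ q⁻¹ ∂μ) ^ q := by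
        rw [lintegral_congr_ae factor]
    _ ≤ ((∫⁻ a, w a ∂μ) ^ (1 - q⁻¹) * (∫⁻ a, w a ^ (1 - q) * f a ^ q ∂μ) ^ q⁻¹) ^ q := by
        gcongr
        exact ENNReal.lintegral_mul_norm_pow_le hw (by fun_prop) (by linarith) (by positivity)
          (by ring)
    _ = (∫⁻ a, w a ∂μ) ^ (q - 1) * ∫⁻ a, w a ^ (1 - q) * f a ^ q ∂μ := by
        rw [ENNReal.mul_rpow_of_nonneg _ _ hq_pos.le, ← ENNReal.rpow_mul, ← ENNReal.rpow_mul,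
          inv_mul_cancel₀ hq_pos.ne', ENNReal.rpow_one, sub_mul, inv_mul_cancel₀ hq_pos.ne',
          one_mul]

theorem lintegral_rpow_le_measure_univ_rpow_mul {p : ℝ} (hp : 1 ≤ p) {f : α → ℝ≥0∞}
    (hf : AEMeasurable f μ) :
    (∫⁻ a, f a ∂μ) ^ p ≤ μ univ ^ (p - 1) * ∫⁻ a, f a ^ p ∂μ := by
  simpa using lintegral_rpow_le_weighted hp hf (aemeasurable_const (b := 1)) (by simp) (by simp)

-- Minkowski's integral inequality, with the `L^q` norms of the slices replaced by a majorant `w`: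
-- Hölder's inequality weighted by `w` then suffices, without duality.
theorem lintegral_rpow_lintegral_le [SFinite μ] [SFinite ν] {q : ℝ} (hq : 1 ≤ q)
    {f : α → β → ℝ≥0∞} (hf : Measurable (Function.uncurry f)) {w : β → ℝ≥0∞} (hw : Measurable w)
    (hw_zero : ∀ᵐ t ∂ν, w t ≠ 0) (hw_top : ∀ᵐ t ∂ν, w t ≠ ∞) {C : ℝ≥0∞}
    (hfw : ∀ᵐ t ∂ν, ∫⁻ x, f x t ^ q ∂μ ≤ C * w t ^ q) :
    ∫⁻ x, (∫⁻ t, f x t ∂ν) ^ q ∂μ ≤ C * (∫⁻ t, w t ∂ν) ^ q := by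
  have hfq : Measurable (Function.uncurry fun x t => w t ^ (1 - q) * f x t ^ q) := by
    unfold Function.uncurry at hf ⊢
    fun_prop
  have slice : ∀ᵐ t ∂ν, ∫⁻ x, w t ^ (1 - q) * f x t ^ q ∂μ ≤ C * w t := by
    filter_upwards [hw_zero, hw_top, hfw] with t h0 ht h
    calc ∫⁻ x, w t ^ (1 - q) * f x t ^ q ∂μ
        = w t ^ (1 - q) * ∫⁻ x, f x t ^ q ∂μ := by
          rw [lintegral_const_mul' _ _ (by simp [ENNReal.rpow_eq_top_iff, h0, ht])]
      _ ≤ w t ^ (1 - q) * (C * w t ^ q) := by gcongr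
      _ = C * w t := by
          rw [mul_left_comm, ← ENNReal.rpow_add _ _ h0 ht, sub_add_cancel, ENNReal.rpow_one]
  calc ∫⁻ x, (∫⁻ t, f x t ∂ν) ^ q ∂μ
      ≤ ∫⁻ x, (∫⁻ t, w t ∂ν) ^ (q - 1) * ∫⁻ t, w t ^ (1 - q) * f x t ^ q ∂ν ∂μ :=
        lintegral_mono fun x => lintegral_rpow_le_weighted hq
          hf.of_uncurry_left.aemeasurable hw.aemeasurable hw_zero hw_top
    _ = (∫⁻ t, w t ∂ν) ^ (q - 1) * ∫⁻ t, ∫⁻ x, w t ^ (1 - q) * f x t ^ q ∂μ ∂ν := by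
        rw [lintegral_const_mul _ (Measurable.lintegral_prod_right hfq),
          lintegral_lintegral_swap hfq.aemeasurable]
    _ ≤ (∫⁻ t, w t ∂ν) ^ (q - 1) * ∫⁻ t, C * w t ∂ν :=
        mul_le_mul' le_rfl (lintegral_mono_ae slice)
    _ = C * (∫⁻ t, w t ∂ν) ^ q := by
        rw [lintegral_const_mul _ hw, mul_left_comm]
        congr 1
        nth_rw 2 [← ENNReal.rpow_one (∫⁻ t, w t ∂ν)]
        rw [← ENNReal.rpow_add_of_nonneg _ _ (by linarith) zero_le_one, sub_add_cancel]

theorem enorm_sub_average_le_laverage {F : Type*} [NormedAddCommGroup F] [NormedSpace ℝ F]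
    [CompleteSpace F] [IsFiniteMeasure μ] [NeZero μ] {f : α → F} (hf : Integrable f μ) (a : F) :
    ‖a - ⨍ y, f y ∂μ‖ₑ ≤ ⨍⁻ y, ‖a - f y‖ₑ ∂μ := by
  have : a - ⨍ y, f y ∂μ = ⨍ y, (a - f y) ∂μ := by
    rw [average, average, integral_sub (integrable_const a) hf.to_average, integral_const]
    simp
  rw [this]
  exact enorm_integral_le_lintegral_enorm _

theorem integral_norm_rpow_eq_toReal_lintegral {F : Type*} [NormedAddCommGroup F] {f : α → F}
    (hf : AEStronglyMeasurable f μ) {r : ℝ} (hr : 0 ≤ r) :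
    ∫ a, ‖f a‖ ^ r ∂μ = (∫⁻ a, ‖f a‖ₑ ^ r ∂μ).toReal := by
  rw [integral_eq_lintegral_of_nonneg_ae (Eventually.of_forall fun a => by positivity)
    (hf.norm.aemeasurable.pow_const r).aestronglyMeasurable]
  simp only [← ENNReal.ofReal_rpow_of_nonneg (norm_nonneg _) hr, ofReal_norm]

theorem abs_abs_rpow_sub_two_mul_self {q : ℝ} (hq : q ≠ 1) (a : ℝ) :
    |(|a| ^ (q - 2) * a)| = |a| ^ (q - 1) := by
  rcases eq_or_ne a 0 with rfl | ha
  · simp [Real.zero_rpow (sub_ne_zero.2 hq)]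
  · rw [abs_mul, abs_of_nonneg (by positivity), ← Real.rpow_add_one (abs_ne_zero.2 ha)]
    congr 1
    ring

theorem abs_rpow_sub_two_mul_self_mul_self {q : ℝ} (hq : q ≠ 0) (a : ℝ) :
    |a| ^ (q - 2) * a * a = |a| ^ q := by
  rcases eq_or_ne a 0 with rfl | ha
  · simp [Real.zero_rpow hq]
  · rw [mul_assoc, ← abs_mul_abs_self, ← pow_two, ← Real.rpow_natCast,
      ← Real.rpow_add (abs_pos.2 ha)]
    congr 1
    push_cast
    ring

theorem rpow_sub_one_mul_le_young {q : ℝ} (hq : 1 ≤ q) {a b : ℝ} (ha : 0 < a) (hb : 0 ≤ b) :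
    a ^ (q - 1) * b ≤ (1 - q⁻¹) * a ^ q + q⁻¹ * b ^ q := by
  have hq_pos : 0 < q := by linarith
  have := Real.geom_mean_le_arith_mean2_weighted (w₁ := 1 - q⁻¹) (w₂ := q⁻¹)
    (sub_nonneg.2 (inv_le_one_of_one_le₀ hq)) (by positivity)
    (Real.rpow_nonneg ha.le q) (Real.rpow_nonneg hb q) (by ring)
  rwa [← Real.rpow_mul ha.le, ← Real.rpow_mul hb, mul_inv_cancel₀ hq_pos.ne', Real.rpow_one,
    mul_one_sub, mul_inv_cancel₀ hq_pos.ne'] at this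

-- The tangent line inequality for the convex function `|·|^q` at the point `a`.
theorem abs_rpow_le_abs_sub_rpow_add {q : ℝ} (hq : 1 < q) (a c : ℝ) :
    |a| ^ q ≤ |a - c| ^ q + q * c * (|a| ^ (q - 2) * a) := by
  rcases eq_or_ne a 0 with rfl | ha
  · have : (0 : ℝ) ^ q = 0 := Real.zero_rpow (by linarith)
    simp only [abs_zero, this, mul_zero, add_zero]
    positivity
  have hq_pos : 0 < q := by linarith
  have key : |a| ^ q ≤ (1 - q⁻¹) * |a| ^ q + q⁻¹ * |a - c| ^ q + c * (|a| ^ (q - 2) * a) := by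
    calc |a| ^ q = |a| ^ (q - 2) * a * (a - c) + c * (|a| ^ (q - 2) * a) := by
          rw [← abs_rpow_sub_two_mul_self_mul_self hq_pos.ne' a]
          ring
      _ ≤ |a| ^ (q - 1) * |a - c| + c * (|a| ^ (q - 2) * a) := by
          rw [← abs_abs_rpow_sub_two_mul_self hq.ne', ← abs_mul]
          gcongr
          exact le_abs_self _
      _ ≤ _ := by
          gcongr
          exact rpow_sub_one_mul_le_young hq.le (abs_pos.2 ha) (abs_nonneg _)
  have scaled := mul_le_mul_of_nonneg_left key hq_pos.le
  field_simp at scaled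
  linarith

theorem integral_abs_rpow_le_integral_abs_sub_rpow {q : ℝ} (hq : 1 < q) {v : α → ℝ} (c : ℝ)
    (hv : Integrable (fun x => |v x| ^ q) μ) (hvc : Integrable (fun x => |v x - c| ^ q) μ)
    (hv' : Integrable (fun x => |v x| ^ (q - 2) * v x) μ)
    (hv_zero : ∫ x, |v x| ^ (q - 2) * v x ∂μ = 0) :
    ∫ x, |v x| ^ q ∂μ ≤ ∫ x, |v x - c| ^ q ∂μ := by
  calc ∫ x, |v x| ^ q ∂μ
      ≤ ∫ x, (|v x - c| ^ q + q * c * (|v x| ^ (q - 2) * v x)) ∂μ :=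
        integral_mono hv (hvc.add (hv'.const_mul _)) fun x =>
          abs_rpow_le_abs_sub_rpow_add hq (v x) c
    _ = ∫ x, |v x - c| ^ q ∂μ := by
        rw [integral_add hvc (hv'.const_mul _), integral_const_mul, hv_zero, mul_zero, add_zero]

end Integral

section Segment

variable {E : Type*} [NormedAddCommGroup E] [NormedSpace ℝ E] [FiniteDimensional ℝ E]
  [MeasurableSpace E] [BorelSpace E] {μ : Measure E} [μ.IsAddHaarMeasure] {Ω : Set E}

theorem lintegral_comp_add_smul {f : E → ℝ≥0∞} (hf : Measurable f) (a : E) {s : ℝ} (hs : s ≠ 0) :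
    ∫⁻ y, f (a + s • y) ∂μ = ENNReal.ofReal |(s ^ finrank ℝ E)⁻¹| * ∫⁻ y, f y ∂μ := by
  calc ∫⁻ y, f (a + s • y) ∂μ = ∫⁻ z, f (a + z) ∂μ.map (s • ·) := by
        rw [lintegral_map (by fun_prop) (by fun_prop)]
    _ = ENNReal.ofReal |(s ^ finrank ℝ E)⁻¹| * ∫⁻ y, f y ∂μ := by
        rw [Measure.map_addHaar_smul _ hs, lintegral_smul_measure, lintegral_add_left_eq_self,
          smul_eq_mul]

theorem ae_comp_add_smul {P : E → Prop} (hP : ∀ᵐ z ∂μ, P z) (a : E) {s : ℝ} (hs : s ≠ 0) :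
    ∀ᵐ y ∂μ, P (a + s • y) := by
  rw [ae_iff] at hP ⊢
  change μ ((s • ·) ⁻¹' ((a + ·) ⁻¹' {z | ¬P z})) = 0
  rw [Measure.addHaar_preimage_smul μ hs, measure_preimage_add, hP, mul_zero]

theorem setLIntegral_comp_segment_le (hΩ : MeasurableSet Ω) (hconv : Convex ℝ Ω) {f : E → ℝ≥0∞}
    (hf : Measurable f) {x : E} (hx : x ∈ Ω) {t : ℝ} (ht : t ∈ Ioc 0 1) :
    ∫⁻ y in Ω, f ((1 - t) • x + t • y) ∂μ ≤
      ENNReal.ofReal (t ^ finrank ℝ E)⁻¹ * ∫⁻ y in Ω, f y ∂μ := by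
  have ht_pos : 0 < t := ht.1
  calc ∫⁻ y in Ω, f ((1 - t) • x + t • y) ∂μ
      ≤ ∫⁻ y, Ω.indicator f ((1 - t) • x + t • y) ∂μ := by
        rw [← lintegral_indicator hΩ]
        refine lintegral_mono <| indicator_le fun y hy => ?_
        rw [indicator_of_mem (hconv hx hy (sub_nonneg.2 ht.2) ht_pos.le (by ring))]
    _ = ENNReal.ofReal (t ^ finrank ℝ E)⁻¹ * ∫⁻ y in Ω, f y ∂μ := by
        rw [lintegral_comp_add_smul (hf.indicator hΩ) _ ht_pos.ne', lintegral_indicator hΩ,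
          abs_of_pos (by positivity)]

theorem setLIntegral_setLIntegral_comp_segment_le (hΩ : MeasurableSet Ω) (hconv : Convex ℝ Ω)
    {f : E → ℝ≥0∞} (hf : Measurable f) {t : ℝ} (ht : t ∈ Icc 0 1) :
    ∫⁻ x in Ω, ∫⁻ y in Ω, f ((1 - t) • x + t • y) ∂μ ∂μ ≤
      2 ^ finrank ℝ E * μ Ω * ∫⁻ y in Ω, f y ∂μ := by
  have of_half_le {s : ℝ} (hs : 1 / 2 ≤ s) (hs_one : s ≤ 1) :
      ∫⁻ x in Ω, ∫⁻ y in Ω, f ((1 - s) • x + s • y) ∂μ ∂μ ≤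
        2 ^ finrank ℝ E * μ Ω * ∫⁻ y in Ω, f y ∂μ := by
    have hs_pos : 0 < s := by linarith
    have inv_le : ENNReal.ofReal (s ^ finrank ℝ E)⁻¹ ≤ 2 ^ finrank ℝ E := by
      rw [← inv_pow, ENNReal.ofReal_pow (by positivity)]
      gcongr
      rw [ENNReal.ofReal_le_ofNat, inv_le_comm₀ hs_pos two_pos]
      linarith
    calc ∫⁻ x in Ω, ∫⁻ y in Ω, f ((1 - s) • x + s • y) ∂μ ∂μ
        ≤ ∫⁻ _ in Ω, 2 ^ finrank ℝ E * ∫⁻ y in Ω, f y ∂μ ∂μ :=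
          setLIntegral_mono' hΩ fun x hx =>
            (setLIntegral_comp_segment_le hΩ hconv hf hx ⟨hs_pos, hs_one⟩).trans (by gcongr)
      _ = 2 ^ finrank ℝ E * μ Ω * ∫⁻ y in Ω, f y ∂μ := by
          rw [setLIntegral_const, mul_right_comm]
  rcases le_total (1 / 2) t with h | h
  · exact of_half_le h ht.2
  -- For `t < 1/2` the change of variables is made in `x` instead of `y`.
  · have := of_half_le (s := 1 - t) (by linarith) (by linarith [ht.1])
    rw [lintegral_lintegral_swap (by fun_prop)]
    simpa only [sub_sub_cancel, add_comm] using this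

/-- The potential `x ↦ ∫_Ω ∫₀¹ g ((1 - t) x + t y) dt dy`: the function `g` is averaged over the
segments joining `x` to the points of `Ω`. It plays the role of a Riesz potential of `g`. -/
noncomputable def segmentPotential (μ : Measure E) (Ω : Set E) (g : E → ℝ≥0∞) (x : E) : ℝ≥0∞ :=
  ∫⁻ y in Ω, (∫⁻ t in Ioo (0 : ℝ) 1, g ((1 - t) • x + t • y)) ∂μ

theorem setLIntegral_comp_segment_rpow_le (hΩ : MeasurableSet Ω) (hconv : Convex ℝ Ω) {p q : ℝ}
    (hp : 1 ≤ p) (hpq : p ≤ q) {g : E → ℝ≥0∞} (hg : Measurable g) {x : E} (hx : x ∈ Ω) {t : ℝ}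
    (ht : t ∈ Ioc 0 1) :
    (∫⁻ y in Ω, g ((1 - t) • x + t • y) ∂μ) ^ q ≤
      (μ Ω ^ (p - 1)) ^ (q / p) *
        (ENNReal.ofReal (t ^ finrank ℝ E)⁻¹ * ∫⁻ y in Ω, g y ^ p ∂μ) ^ (q / p - 1) *
          ∫⁻ y in Ω, g ((1 - t) • x + t • y) ^ p ∂μ := by
  have hp_pos : 0 < p := by linarith
  have hr : 0 ≤ q / p - 1 := by rwa [sub_nonneg, one_le_div hp_pos]
  have hqp : 0 ≤ q / p := by linarith
  set H := ∫⁻ y in Ω, g ((1 - t) • x + t • y) ^ p ∂μ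
  have jensen : (∫⁻ y in Ω, g ((1 - t) • x + t • y) ∂μ) ^ p ≤ μ Ω ^ (p - 1) * H := by
    simpa using lintegral_rpow_le_measure_univ_rpow_mul (μ := μ.restrict Ω) hp
      (f := fun y => g ((1 - t) • x + t • y)) (by fun_prop)
  have dilation : H ≤ ENNReal.ofReal (t ^ finrank ℝ E)⁻¹ * ∫⁻ y in Ω, g y ^ p ∂μ :=
    setLIntegral_comp_segment_le hΩ hconv (hg.pow_const p) hx ht
  calc (∫⁻ y in Ω, g ((1 - t) • x + t • y) ∂μ) ^ q
      = ((∫⁻ y in Ω, g ((1 - t) • x + t • y) ∂μ) ^ p) ^ (q / p) := by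
        rw [← ENNReal.rpow_mul, mul_div_cancel₀ q hp_pos.ne']
    _ ≤ (μ Ω ^ (p - 1) * H) ^ (q / p) := by gcongr
    _ = (μ Ω ^ (p - 1)) ^ (q / p) * (H ^ (q / p - 1) * H) := by
        rw [ENNReal.mul_rpow_of_nonneg _ _ (by positivity)]
        nth_rw 3 [← ENNReal.rpow_one H]
        rw [← ENNReal.rpow_add_of_nonneg _ _ hr zero_le_one, sub_add_cancel]
    _ ≤ _ := by
        rw [mul_assoc]
        gcongr

theorem setLIntegral_setLIntegral_comp_segment_rpow_le (hΩ : MeasurableSet Ω)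
    (hconv : Convex ℝ Ω) {p q : ℝ} (hp : 1 ≤ p) (hpq : p ≤ q) {g : E → ℝ≥0∞} (hg : Measurable g)
    {t : ℝ} (ht : t ∈ Ioc 0 1) :
    ∫⁻ x in Ω, (∫⁻ y in Ω, g ((1 - t) • x + t • y) ∂μ) ^ q ∂μ ≤
      (μ Ω ^ (p - 1)) ^ (q / p) * (2 ^ finrank ℝ E * μ Ω) * (∫⁻ y in Ω, g y ^ p ∂μ) ^ (q / p) *
        ENNReal.ofReal (t ^ (-(finrank ℝ E * (p⁻¹ - q⁻¹)))) ^ q := by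
  have ht_pos : 0 < t := ht.1
  have hp_pos : 0 < p := by linarith
  have hq_pos : 0 < q := by linarith
  have hr : 0 ≤ q / p - 1 := by rwa [sub_nonneg, one_le_div hp_pos]
  set d := finrank ℝ E
  set S := ∫⁻ y in Ω, g y ^ p ∂μ
  have S_pow : S ^ (q / p) = S ^ (q / p - 1) * S := by
    nth_rw 3 [← ENNReal.rpow_one S]
    rw [← ENNReal.rpow_add_of_nonneg _ _ hr zero_le_one, sub_add_cancel]
  have t_pow : ENNReal.ofReal (t ^ d)⁻¹ ^ (q / p - 1) =
      ENNReal.ofReal (t ^ (-(d * (p⁻¹ - q⁻¹)))) ^ q := by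
    rw [ENNReal.ofReal_rpow_of_pos (by positivity), ENNReal.ofReal_rpow_of_pos (by positivity),
      ← Real.rpow_natCast, ← Real.rpow_neg ht_pos.le, ← Real.rpow_mul ht_pos.le,
      ← Real.rpow_mul ht_pos.le]
    congr 2
    field_simp
  calc ∫⁻ x in Ω, (∫⁻ y in Ω, g ((1 - t) • x + t • y) ∂μ) ^ q ∂μ
      ≤ ∫⁻ x in Ω, (μ Ω ^ (p - 1)) ^ (q / p) *
          (ENNReal.ofReal (t ^ d)⁻¹ * S) ^ (q / p - 1) *
            ∫⁻ y in Ω, g ((1 - t) • x + t • y) ^ p ∂μ ∂μ :=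
        setLIntegral_mono' hΩ fun x hx =>
          setLIntegral_comp_segment_rpow_le hΩ hconv hp hpq hg hx ht
    _ = (μ Ω ^ (p - 1)) ^ (q / p) * (ENNReal.ofReal (t ^ d)⁻¹ * S) ^ (q / p - 1) *
          ∫⁻ x in Ω, ∫⁻ y in Ω, g ((1 - t) • x + t • y) ^ p ∂μ ∂μ :=
        lintegral_const_mul _ (Measurable.lintegral_prod_right (by fun_prop))
    _ ≤ (μ Ω ^ (p - 1)) ^ (q / p) * (ENNReal.ofReal (t ^ d)⁻¹ * S) ^ (q / p - 1) *
          (2 ^ d * μ Ω * S) := by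
        gcongr
        exact setLIntegral_setLIntegral_comp_segment_le hΩ hconv (hg.pow_const p)
          ⟨ht_pos.le, ht.2⟩
    _ = _ := by
        rw [ENNReal.mul_rpow_of_nonneg _ _ hr, t_pow, S_pow]
        ring

theorem setLIntegral_ofReal_rpow_ne_top {r : ℝ} (hr : -1 < r) :
    ∫⁻ t in Ioo (0 : ℝ) 1, ENNReal.ofReal (t ^ r) ≠ ∞ :=
  ((intervalIntegral.integrableOn_Ioo_rpow_iff one_pos).2 hr).lintegral_lt_top.ne

theorem setLIntegral_segmentPotential_rpow_le (hΩ : MeasurableSet Ω) (hconv : Convex ℝ Ω)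
    {p q : ℝ} (hp : 1 ≤ p) (hpq : p ≤ q) {g : E → ℝ≥0∞} (hg : Measurable g) :
    ∫⁻ x in Ω, segmentPotential μ Ω g x ^ q ∂μ ≤
      (μ Ω ^ (p - 1)) ^ (q / p) * (2 ^ finrank ℝ E * μ Ω) * (∫⁻ y in Ω, g y ^ p ∂μ) ^ (q / p) *
        (∫⁻ t in Ioo (0 : ℝ) 1, ENNReal.ofReal (t ^ (-(finrank ℝ E * (p⁻¹ - q⁻¹))))) ^ q := by
  have swap (x : E) : segmentPotential μ Ω g x =
      ∫⁻ t in Ioo (0 : ℝ) 1, ∫⁻ y in Ω, g ((1 - t) • x + t • y) ∂μ :=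
    lintegral_lintegral_swap (by fun_prop)
  simp_rw [swap]
  refine lintegral_rpow_lintegral_le (hp.trans hpq)
    (Measurable.lintegral_prod_right (by fun_prop)) (by fun_prop) ?_ (by simp) ?_
  · filter_upwards [ae_restrict_mem measurableSet_Ioo] with t ht
    simpa using Real.rpow_pos_of_pos ht.1 _
  · filter_upwards [ae_restrict_mem measurableSet_Ioo] with t ht
    exact setLIntegral_setLIntegral_comp_segment_rpow_le hΩ hconv hp hpq hg ⟨ht.1, ht.2.le⟩

theorem exists_setLIntegral_segmentPotential_rpow_le (hΩ : MeasurableSet Ω) (hconv : Convex ℝ Ω)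
    (hΩ_top : μ Ω ≠ ∞) {p q : ℝ} (hp : 1 ≤ p) (hpq : p ≤ q)
    (hsub : finrank ℝ E * (p⁻¹ - q⁻¹) < 1) :
    ∃ C ≠ ∞, ∀ g : E → ℝ≥0∞, Measurable g →
      ∫⁻ x in Ω, segmentPotential μ Ω g x ^ q ∂μ ≤ C * (∫⁻ y in Ω, g y ^ p ∂μ) ^ (q / p) := by
  refine ⟨(μ Ω ^ (p - 1)) ^ (q / p) * (2 ^ finrank ℝ E * μ Ω) *
    (∫⁻ t in Ioo (0 : ℝ) 1, ENNReal.ofReal (t ^ (-(finrank ℝ E * (p⁻¹ - q⁻¹))))) ^ q, ?_,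
    fun g hg => (setLIntegral_segmentPotential_rpow_le hΩ hconv hp hpq hg).trans_eq
      (mul_right_comm _ _ _)⟩
  have hq : 0 ≤ q := by linarith
  have hqp : 0 ≤ q / p := div_nonneg hq (by linarith)
  have ht := setLIntegral_ofReal_rpow_ne_top (neg_lt_neg hsub)
  have h2 : (2 : ℝ≥0∞) ^ finrank ℝ E ≠ ∞ := by simp
  have hp' : 0 ≤ p - 1 := by linarith
  finiteness

end Segment

section Continuous

variable {X : Type*} [MetricSpace X] [ProperSpace X] [MeasurableSpace X] [BorelSpace X]
  {μ : Measure X} [IsFiniteMeasureOnCompacts μ] {Ω : Set X} {f : X → ℝ}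

theorem integrableOn_of_continuous_of_isBounded (hf : Continuous f)
    (hΩ : Bornology.IsBounded Ω) : IntegrableOn f Ω μ :=
  (hf.continuousOn.integrableOn_compact hΩ.isCompact_closure).mono_set subset_closure

theorem setIntegral_abs_rpow_pos [μ.IsOpenPosMeasure] (hf : Continuous f) (hΩ : IsOpen Ω)
    (hbdd : Bornology.IsBounded Ω) {q : ℝ} (hq : 0 ≤ q) (hf_ne : ∃ x ∈ Ω, f x ≠ 0) :
    0 < ∫ x in Ω, |f x| ^ q ∂μ := by
  have cont : Continuous fun x => |f x| ^ q := hf.abs.rpow_const fun _ => Or.inr hq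
  rw [setIntegral_pos_iff_support_of_nonneg_ae
    (Eventually.of_forall fun x => Real.rpow_nonneg (abs_nonneg _) q)
    (integrableOn_of_continuous_of_isBounded cont hbdd)]
  obtain ⟨x, hx, hx0⟩ := hf_ne
  exact (cont.isOpen_support.inter hΩ).measure_pos μ
    ⟨x, (Real.rpow_pos_of_pos (abs_pos.2 hx0) q).ne', hx⟩

theorem setIntegral_abs_rpow_le_setIntegral_abs_sub_rpow (hf : Continuous f)
    (hΩ : Bornology.IsBounded Ω) {q : ℝ} (hq : 1 < q) (c : ℝ)
    (hf_zero : ∫ x in Ω, |f x| ^ (q - 2) * f x ∂μ = 0) :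
    ∫ x in Ω, |f x| ^ q ∂μ ≤ ∫ x in Ω, |f x - c| ^ q ∂μ := by
  have hf_meas : Measurable f := hf.measurable
  have hq_pos : 0 < q := by linarith
  have integrable_rpow {g : X → ℝ} (hg : Continuous g) {r : ℝ} (hr : 0 ≤ r) :
      IntegrableOn (fun x => |g x| ^ r) Ω μ :=
    integrableOn_of_continuous_of_isBounded (hg.abs.rpow_const fun _ => Or.inr hr) hΩ
  refine integral_abs_rpow_le_integral_abs_sub_rpow hq c (integrable_rpow hf hq_pos.le)
    (integrable_rpow (hf.sub continuous_const) hq_pos.le) ?_ hf_zero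
  exact (integrable_rpow hf (sub_pos.2 hq).le).mono' (by fun_prop)
    (Eventually.of_forall fun x => (abs_abs_rpow_sub_two_mul_self hq.ne' (f x)).le)

end Continuous

section Lipschitz

variable {E : Type*} [NormedAddCommGroup E] [NormedSpace ℝ E] {V : E → ℝ} {K : ℝ≥0}

theorem lipschitzWith_comp_segment (hV : LipschitzWith K V) (x y : E) :
    LipschitzWith (K * ‖y - x‖₊) fun t : ℝ => V ((1 - t) • x + t • y) := by
  refine LipschitzWith.of_dist_le_mul fun s t => ?_
  have : (1 - s) • x + s • y - ((1 - t) • x + t • y) = (s - t) • (y - x) := by module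
  calc dist (V ((1 - s) • x + s • y)) (V ((1 - t) • x + t • y))
      ≤ K * ‖(s - t) • (y - x)‖ := by
        rw [← this, ← dist_eq_norm]
        exact hV.dist_le_mul _ _
    _ = ↑(K * ‖y - x‖₊) * dist s t := by
        rw [norm_smul, dist_eq_norm, NNReal.coe_mul, coe_nnnorm]
        ring

theorem enorm_sub_le_lintegral_fderiv_segment (hV : LipschitzWith K V) {x y : E}
    (hdiff : ∀ᵐ t ∂volume.restrict (Ioo (0 : ℝ) 1),
      DifferentiableAt ℝ V ((1 - t) • x + t • y)) :
    ‖V y - V x‖ₑ ≤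
      ‖y - x‖ₑ * ∫⁻ t in Ioo (0 : ℝ) 1, ‖fderiv ℝ V ((1 - t) • x + t • y)‖ₑ := by
  have ftc : V y - V x = ∫ t in Ioo (0 : ℝ) 1, deriv (fun t => V ((1 - t) • x + t • y)) t := by
    rw [← integral_Ioc_eq_integral_Ioo, ← intervalIntegral.integral_of_le zero_le_one,
      ((lipschitzWith_comp_segment hV x y).lipschitzOnWith
        (s := uIcc 0 1)).absolutelyContinuousOnInterval.integral_deriv_eq_sub]
    simp
  rw [ftc, ← lintegral_const_mul' _ _ enorm_ne_top]
  refine (enorm_integral_le_lintegral_enorm _).trans (lintegral_mono_ae ?_)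
  filter_upwards [hdiff] with t ht
  have segment_deriv : HasDerivAt (fun t : ℝ => (1 - t) • x + t • y) (y - x) t := by
    simpa only [← AffineMap.lineMap_apply_module] using AffineMap.hasDerivAt_lineMap
  have comp_deriv : HasDerivAt (fun t => V ((1 - t) • x + t • y))
      (fderiv ℝ V ((1 - t) • x + t • y) (y - x)) t :=
    ht.hasFDerivAt.comp_hasDerivAt t segment_deriv
  rw [comp_deriv.deriv, mul_comm]
  exact ContinuousLinearMap.le_opENorm _ _

variable [MeasurableSpace E] {μ : Measure E} {Ω : Set E}

theorem setLIntegral_enorm_fderiv_rpow_ne_top (hV : LipschitzWith K V)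
    (hΩ_top : μ Ω ≠ ∞) {p : ℝ} (hp : 0 ≤ p) : ∫⁻ x in Ω, ‖fderiv ℝ V x‖ₑ ^ p ∂μ ≠ ∞ := by
  refine ne_top_of_le_ne_top (b := (K : ℝ≥0∞) ^ p * μ Ω) (by finiteness) ?_
  rw [← setLIntegral_const]
  refine lintegral_mono fun x => ?_
  gcongr
  rw [← ofReal_norm, ENNReal.ofReal_le_iff_le_toReal ENNReal.coe_ne_top]
  exact norm_fderiv_le_of_lipschitz ℝ hV

variable [FiniteDimensional ℝ E] [BorelSpace E] [μ.IsAddHaarMeasure]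

theorem ae_ae_differentiableAt_segment (hV : LipschitzWith K V) (x : E) :
    ∀ᵐ y ∂μ, ∀ᵐ t ∂volume.restrict (Ioo (0 : ℝ) 1),
      DifferentiableAt ℝ V ((1 - t) • x + t • y) := by
  have meas : MeasurableSet {z | DifferentiableAt ℝ V z} := measurableSet_of_differentiableAt ℝ V
  have slice : ∀ᵐ t ∂volume.restrict (Ioo (0 : ℝ) 1), ∀ᵐ y ∂μ,
      DifferentiableAt ℝ V ((1 - t) • x + t • y) := by
    filter_upwards [ae_restrict_mem measurableSet_Ioo] with t ht
    exact ae_comp_add_smul hV.ae_differentiableAt _ ht.1.ne'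
  have pair_meas : Measurable fun z : ℝ × E => (1 - z.1) • x + z.1 • z.2 := by fun_prop
  exact (Measure.ae_ae_comm (p := fun t y => DifferentiableAt ℝ V ((1 - t) • x + t • y))
    (pair_meas meas)).1 slice

end Lipschitz

section Poincare

variable {E : Type*} [NormedAddCommGroup E] [NormedSpace ℝ E] [FiniteDimensional ℝ E]
  [MeasurableSpace E] [BorelSpace E] {μ : Measure E} [μ.IsAddHaarMeasure] {Ω : Set E}

theorem enorm_sub_setAverage_le_segmentPotential (hΩ : MeasurableSet Ω) (hμ : μ Ω ≠ 0)
    (hbdd : Bornology.IsBounded Ω) {V : E → ℝ} {K : ℝ≥0} (hV : LipschitzWith K V) {x : E}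
    (hx : x ∈ Ω) :
    ‖V x - ⨍ y in Ω, V y ∂μ‖ₑ ≤
      (μ Ω)⁻¹ * ENNReal.ofReal (diam Ω) * segmentPotential μ Ω (fun z => ‖fderiv ℝ V z‖ₑ) x := by
  have : IsFiniteMeasure (μ.restrict Ω) := ⟨by simpa using hbdd.measure_lt_top⟩
  have : NeZero (μ.restrict Ω) := ⟨by simpa using hμ⟩
  calc ‖V x - ⨍ y in Ω, V y ∂μ‖ₑ
      ≤ ⨍⁻ y in Ω, ‖V x - V y‖ₑ ∂μ :=
        have hV_int : IntegrableOn V Ω μ :=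
          integrableOn_of_continuous_of_isBounded hV.continuous hbdd
        enorm_sub_average_le_laverage hV_int _
    _ = (μ Ω)⁻¹ * ∫⁻ y in Ω, ‖V x - V y‖ₑ ∂μ := by
        rw [setLAverage_eq, ENNReal.div_eq_inv_mul]
    _ ≤ (μ Ω)⁻¹ * ∫⁻ y in Ω, ENNReal.ofReal (diam Ω) *
          (∫⁻ t in Ioo (0 : ℝ) 1, ‖fderiv ℝ V ((1 - t) • x + t • y)‖ₑ) ∂μ := by
        refine mul_le_mul' le_rfl (lintegral_mono_ae ?_)
        filter_upwards [ae_restrict_mem hΩ,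
          ae_restrict_of_ae (ae_ae_differentiableAt_segment hV x)] with y hy hdiff
        rw [enorm_sub_rev]
        refine (enorm_sub_le_lintegral_fderiv_segment hV hdiff).trans ?_
        gcongr
        rw [← ofReal_norm, ← dist_eq_norm]
        exact ENNReal.ofReal_le_ofReal (dist_le_diam_of_mem hbdd hy hx)
    _ = _ := by
        rw [lintegral_const_mul' _ _ ENNReal.ofReal_ne_top, mul_assoc]
        rfl

theorem exists_setLIntegral_sub_setAverage_rpow_le (hΩ : MeasurableSet Ω) (hconv : Convex ℝ Ω)
    (hbdd : Bornology.IsBounded Ω) (hμ : μ Ω ≠ 0) {p q : ℝ} (hp : 1 ≤ p) (hpq : p ≤ q)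
    (hsub : finrank ℝ E * (p⁻¹ - q⁻¹) < 1) :
    ∃ C ≠ ∞, ∀ (V : E → ℝ) (K : ℝ≥0), LipschitzWith K V →
      ∫⁻ x in Ω, ‖V x - ⨍ y in Ω, V y ∂μ‖ₑ ^ q ∂μ ≤
        C * (∫⁻ x in Ω, ‖fderiv ℝ V x‖ₑ ^ p ∂μ) ^ (q / p) := by
  have hq : 0 ≤ q := by linarith
  obtain ⟨C, hC, potential_le⟩ := exists_setLIntegral_segmentPotential_rpow_le (μ := μ) hΩ
    hconv hbdd.measure_lt_top.ne hp hpq hsub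
  set A := (μ Ω)⁻¹ * ENNReal.ofReal (diam Ω)
  have hA : A ^ q ≠ ∞ := by
    have : A ≠ ∞ := by finiteness
    finiteness
  refine ⟨A ^ q * C, by finiteness, fun V K hV => ?_⟩
  calc ∫⁻ x in Ω, ‖V x - ⨍ y in Ω, V y ∂μ‖ₑ ^ q ∂μ
      ≤ ∫⁻ x in Ω, A ^ q * segmentPotential μ Ω (fun z => ‖fderiv ℝ V z‖ₑ) x ^ q ∂μ := by
        refine setLIntegral_mono' hΩ fun x hx => ?_
        rw [← ENNReal.mul_rpow_of_nonneg _ _ hq]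
        gcongr
        exact enorm_sub_setAverage_le_segmentPotential hΩ hμ hbdd hV hx
    _ = A ^ q * ∫⁻ x in Ω, segmentPotential μ Ω (fun z => ‖fderiv ℝ V z‖ₑ) x ^ q ∂μ :=
        lintegral_const_mul' _ _ hA
    _ ≤ _ := by
        rw [mul_assoc]
        gcongr
        exact potential_le _ (measurable_fderiv ℝ V).enorm

theorem exists_setIntegral_sub_setAverage_rpow_le (hΩ : MeasurableSet Ω) (hconv : Convex ℝ Ω)
    (hbdd : Bornology.IsBounded Ω) (hμ : μ Ω ≠ 0) {p q : ℝ} (hp : 1 ≤ p) (hpq : p ≤ q)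
    (hsub : finrank ℝ E * (p⁻¹ - q⁻¹) < 1) :
    ∃ C > 0, ∀ (V : E → ℝ) (K : ℝ≥0), LipschitzWith K V →
      (∫ x in Ω, |V x - ⨍ y in Ω, V y ∂μ| ^ q ∂μ) ^ (p / q) ≤
        C * ∫ x in Ω, ‖fderiv ℝ V x‖ ^ p ∂μ := by
  have hp_pos : 0 < p := by linarith
  have hq_pos : 0 < q := by linarith
  obtain ⟨C, hC, lintegral_le⟩ :=
    exists_setLIntegral_sub_setAverage_rpow_le hΩ hconv hbdd hμ hp hpq hsub
  refine ⟨C.toReal ^ (p / q) + 1, by positivity, fun V K hV => ?_⟩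
  set S := ∫ x in Ω, ‖fderiv ℝ V x‖ ^ p ∂μ with hS
  have hS_nonneg : 0 ≤ S := integral_nonneg fun x => by positivity
  have integral_le : ∫ x in Ω, |V x - ⨍ y in Ω, V y ∂μ| ^ q ∂μ ≤ C.toReal * S ^ (q / p) := by
    have sub_meas : AEStronglyMeasurable (fun x => V x - ⨍ y in Ω, V y ∂μ) (μ.restrict Ω) :=
      (hV.continuous.sub continuous_const).aestronglyMeasurable
    simp only [hS, ← Real.norm_eq_abs]
    rw [integral_norm_rpow_eq_toReal_lintegral (measurable_fderiv ℝ V).aestronglyMeasurable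
        hp_pos.le, integral_norm_rpow_eq_toReal_lintegral sub_meas hq_pos.le,
      ENNReal.toReal_rpow, ← ENNReal.toReal_mul]
    have := setLIntegral_enorm_fderiv_rpow_ne_top hV hbdd.measure_lt_top.ne hp_pos.le (μ := μ)
    exact ENNReal.toReal_mono (by finiteness) (lintegral_le V K hV)
  calc (∫ x in Ω, |V x - ⨍ y in Ω, V y ∂μ| ^ q ∂μ) ^ (p / q)
      ≤ (C.toReal * S ^ (q / p)) ^ (p / q) := by
        gcongr
    _ = C.toReal ^ (p / q) * S := by
        rw [Real.mul_rpow (by positivity) (by positivity), ← Real.rpow_mul hS_nonneg,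
          div_mul_div_cancel₀ hp_pos.ne', div_self hq_pos.ne', Real.rpow_one]
    _ ≤ (C.toReal ^ (p / q) + 1) * S := by gcongr; linarith

theorem exists_setIntegral_abs_rpow_le (hΩ : IsOpen Ω) (hconv : Convex ℝ Ω)
    (hbdd : Bornology.IsBounded Ω) (hne : Ω.Nonempty) {p q : ℝ} (hp : 1 ≤ p) (hpq : p < q)
    (hsub : finrank ℝ E * (p⁻¹ - q⁻¹) < 1) :
    ∃ C > 0, ∀ (V : E → ℝ) (K : ℝ≥0), LipschitzWith K V →
      ∫ x in Ω, |V x| ^ (q - 2) * V x ∂μ = 0 →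
        (∫ x in Ω, |V x| ^ q ∂μ) ^ (p / q) ≤ C * ∫ x in Ω, ‖fderiv ℝ V x‖ ^ p ∂μ := by
  have hq : 1 < q := by linarith
  obtain ⟨C, hC, poincare⟩ := exists_setIntegral_sub_setAverage_rpow_le hΩ.measurableSet hconv
    hbdd (hΩ.measure_pos μ hne).ne' hp hpq.le hsub
  refine ⟨C, hC, fun V K hV hV_zero => le_trans ?_ (poincare V K hV)⟩
  have drop_average := setIntegral_abs_rpow_le_setIntegral_abs_sub_rpow hV.continuous hbdd hq
    (⨍ y in Ω, V y ∂μ) hV_zero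
  have : 0 ≤ p / q := div_nonneg (by linarith) (by linarith)
  gcongr

end Poincare

section Rayleigh

variable {N : ℕ} {p q : ℝ} {Ω : Set (EuclideanSpace ℝ (Fin N))}
  {v w : EuclideanSpace ℝ (Fin N) → ℝ}

/-- The class of competitors in the variational definition of `μ_{p,q}(Ω)`. -/
structure IsNeumannCompetitor (q : ℝ) (Ω : Set (EuclideanSpace ℝ (Fin N)))
    (v : EuclideanSpace ℝ (Fin N) → ℝ) : Prop where
  lipschitzOnWith : ∃ K : ℝ≥0, LipschitzOnWith K v (closure Ω)
  exists_ne_zero : ∃ x ∈ Ω, v x ≠ 0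
  integral_eq_zero : ∫ x in Ω, |v x| ^ (q - 2) * v x = 0

theorem rayleighQuot_nonneg : 0 ≤ rayleighQuot p q Ω v :=
  div_nonneg (integral_nonneg fun _ => by positivity)
    (Real.rpow_nonneg (integral_nonneg fun _ => by positivity) _)

theorem rayleighQuot_congr (hΩ : IsOpen Ω) (h : EqOn v w Ω) :
    rayleighQuot p q Ω v = rayleighQuot p q Ω w := by
  have fderiv_eq : ∀ x ∈ Ω, ‖fderiv ℝ v x‖ ^ p = ‖fderiv ℝ w x‖ ^ p := fun x hx => by
    rw [(h.eventuallyEq_of_mem (hΩ.mem_nhds hx)).fderiv_eq]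
  have abs_eq : ∀ x ∈ Ω, |v x| ^ q = |w x| ^ q := fun x hx => by rw [h hx]
  unfold rayleighQuot
  rw [setIntegral_congr_fun hΩ.measurableSet fderiv_eq,
    setIntegral_congr_fun hΩ.measurableSet abs_eq]

theorem muPQ_nonneg : 0 ≤ muPQ p q Ω := by
  refine Real.sInf_nonneg ?_
  rintro _ ⟨v, K, -, -, -, rfl⟩
  exact rayleighQuot_nonneg

theorem muPQ_le_rayleighQuot (hv : IsNeumannCompetitor q Ω v) :
    muPQ p q Ω ≤ rayleighQuot p q Ω v := by
  obtain ⟨K, hK⟩ := hv.lipschitzOnWith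
  refine csInf_le ⟨0, ?_⟩ ⟨v, K, hK, hv.exists_ne_zero, hv.integral_eq_zero, rfl⟩
  rintro _ ⟨w, L, -, -, -, rfl⟩
  exact rayleighQuot_nonneg

-- A competitor has to exist because `sInf ∅ = 0`.
theorem le_muPQ {κ : ℝ} (hv : IsNeumannCompetitor q Ω v)
    (hκ : ∀ w, IsNeumannCompetitor q Ω w → κ ≤ rayleighQuot p q Ω w) : κ ≤ muPQ p q Ω := by
  obtain ⟨K, hK⟩ := hv.lipschitzOnWith
  refine le_csInf ⟨_, v, K, hK, hv.exists_ne_zero, hv.integral_eq_zero, rfl⟩ ?_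
  rintro _ ⟨w, L, hL, hw, hw_zero, rfl⟩
  exact hκ w ⟨⟨L, hL⟩, hw, hw_zero⟩

theorem exists_pos_le_rayleighQuot (hΩ : IsOpen Ω) (hconv : Convex ℝ Ω)
    (hbdd : Bornology.IsBounded Ω) (hne : Ω.Nonempty) (hp : 1 ≤ p) (hpq : p < q)
    (hsub : N * (p⁻¹ - q⁻¹) < 1) :
    ∃ κ > 0, ∀ v, IsNeumannCompetitor q Ω v → κ ≤ rayleighQuot p q Ω v := by
  obtain ⟨C, hC, poincare⟩ := exists_setIntegral_abs_rpow_le (μ := volume) hΩ hconv hbdd hne hp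
    hpq (by rwa [finrank_euclideanSpace_fin])
  refine ⟨C⁻¹, inv_pos.2 hC, fun v hv => ?_⟩
  obtain ⟨K, hK⟩ := hv.lipschitzOnWith
  obtain ⟨V, hV, eqOn_closure⟩ := hK.extend_real
  have eqOn : EqOn v V Ω := eqOn_closure.mono subset_closure
  have V_zero : ∫ x in Ω, |V x| ^ (q - 2) * V x = 0 := by
    rw [← hv.integral_eq_zero]
    exact setIntegral_congr_fun hΩ.measurableSet fun x hx => by simp only [eqOn hx]
  have denom_pos : 0 < ∫ x in Ω, |V x| ^ q := by
    obtain ⟨x, hx, hx0⟩ := hv.exists_ne_zero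
    exact setIntegral_abs_rpow_pos hV.continuous hΩ hbdd (by linarith) ⟨x, hx, eqOn hx ▸ hx0⟩
  rw [rayleighQuot_congr hΩ eqOn, rayleighQuot, le_div_iff₀ (Real.rpow_pos_of_pos denom_pos _),
    inv_mul_le_iff₀ hC]
  exact poincare V K hV V_zero

theorem muPQ_pos (hΩ : IsOpen Ω) (hconv : Convex ℝ Ω) (hbdd : Bornology.IsBounded Ω)
    (hp : 1 ≤ p) (hpq : p < q) (hsub : N * (p⁻¹ - q⁻¹) < 1) (hv : IsNeumannCompetitor q Ω v) :
    0 < muPQ p q Ω := by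
  obtain ⟨x, hx, -⟩ := hv.exists_ne_zero
  obtain ⟨κ, hκ, le_rayleighQuot⟩ :=
    exists_pos_le_rayleighQuot hΩ hconv hbdd ⟨x, hx⟩ hp hpq hsub
  exact hκ.trans_le (le_muPQ hv le_rayleighQuot)

theorem ltCritical.mul_inv_sub_inv_lt_one (hq : ltCritical N p q) (hp_pos : 0 < p)
    (hq_pos : 0 < q) : N * (p⁻¹ - q⁻¹) < 1 := by
  rw [inv_sub_inv hp_pos.ne' hq_pos.ne', mul_div_assoc', div_lt_one (mul_pos hp_pos hq_pos)]
  rcases lt_or_ge p N with hpN | hNp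
  · have := hq hpN
    rw [lt_div_iff₀ (sub_pos.2 hpN)] at this
    linarith
  · rcases (Nat.cast_nonneg N : (0 : ℝ) ≤ N).eq_or_lt with hN | hN
    · rw [← hN, zero_mul]
      positivity
    · nlinarith

end Rayleigh

section LinearImage

variable {G F : Type*} [InvolutiveNeg G] [MeasurableSpace G] [MeasurableNeg G]
  [NormedAddCommGroup F] [NormedSpace ℝ F]

theorem setIntegral_eq_zero_of_odd {μ : Measure G} [μ.IsNegInvariant] {f : G → F}
    (hf : Function.Odd f) {s : Set G} (hs : Neg.neg ⁻¹' s = s) : ∫ x in s, f x ∂μ = 0 := by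
  have integral_eq_neg : ∫ x in s, f x ∂μ = -∫ x in s, f x ∂μ := by
    calc ∫ x in s, f x ∂μ = ∫ x in Neg.neg ⁻¹' s, f (-x) ∂μ :=
          ((Measure.measurePreserving_neg μ).setIntegral_preimage_emb
            (MeasurableEquiv.neg G).measurableEmbedding f s).symm
      _ = -∫ x in s, f x ∂μ := by
          simp only [hs, hf _, integral_neg]
  have : IsAddTorsionFree F := .of_isTorsionFree ℝ F
  exact self_eq_neg.1 integral_eq_neg

variable {E : Type*} [NormedAddCommGroup E] [NormedSpace ℝ E] [FiniteDimensional ℝ E]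
  [MeasurableSpace E] [BorelSpace E]

theorem setIntegral_image_continuousLinearMap {μ : Measure E} [μ.IsAddHaarMeasure]
    {T : E →L[ℝ] E} (hT : T.det ≠ 0) {s : Set E} (hs : MeasurableSet s) (g : E → F) :
    ∫ x in T '' s, g x ∂μ = |T.det| • ∫ x in s, g (T x) ∂μ := by
  have inj : InjOn T s := (T.toContinuousLinearEquivOfDetNeZero hT).injective.injOn
  rw [integral_image_eq_integral_abs_det_fderiv_smul μ hs (fun _ _ => T.hasFDerivWithinAt) inj,
    integral_smul]

end LinearImage

section LinearTestFunction

variable {N : ℕ} {p q : ℝ} {Ω : Set (EuclideanSpace ℝ (Fin N))}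
  {ℓ : EuclideanSpace ℝ (Fin N) →L[ℝ] ℝ}

theorem isNeumannCompetitor_continuousLinearMap (hΩ : Neg.neg ⁻¹' Ω = Ω)
    (hℓ : ∃ x ∈ Ω, ℓ x ≠ 0) : IsNeumannCompetitor q Ω ℓ where
  lipschitzOnWith := ⟨‖ℓ‖₊, ℓ.lipschitz.lipschitzOnWith⟩
  exists_ne_zero := hℓ
  integral_eq_zero :=
    setIntegral_eq_zero_of_odd (fun x => by rw [map_neg, abs_neg, mul_neg]) hΩ

theorem rayleighQuot_continuousLinearMap :
    rayleighQuot p q Ω ℓ =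
      volume.real Ω * ‖ℓ‖ ^ p / (∫ x in Ω, |ℓ x| ^ q) ^ (p / q) := by
  simp only [rayleighQuot, ContinuousLinearMap.fderiv, setIntegral_const, smul_eq_mul]

theorem rayleighQuot_image_continuousLinearMap
    {T : EuclideanSpace ℝ (Fin N) →L[ℝ] EuclideanSpace ℝ (Fin N)} (hT : T.det ≠ 0)
    (hℓ : ∀ x, ℓ (T x) = ℓ x) (hΩ : MeasurableSet Ω) :
    rayleighQuot p q (T '' Ω) ℓ = |T.det| ^ (1 - p / q) * rayleighQuot p q Ω ℓ := by
  have det_pos : 0 < |T.det| := abs_pos.2 hT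
  have volume_image : volume.real (T '' Ω) = |T.det| * volume.real Ω := by
    simp [measureReal_def, Measure.addHaar_image_continuousLinearMap]
  rw [rayleighQuot_continuousLinearMap, rayleighQuot_continuousLinearMap, volume_image,
    setIntegral_image_continuousLinearMap hT hΩ, smul_eq_mul,
    Real.mul_rpow det_pos.le (integral_nonneg fun _ => by positivity), Real.rpow_sub det_pos,
    Real.rpow_one]
  simp only [hℓ]
  rw [mul_assoc, mul_div_mul_comm]

end LinearTestFunction

section SqueezedBall

variable {N : ℕ} {i : Fin N} {δ r p q : ℝ}

/-- The diagonal map `diag(δ, …, δ, 1, δ, …, δ)` of `ℝ^N`, with the entry `1` in position `i`. -/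
noncomputable def squeeze (i : Fin N) (δ : ℝ) :
    EuclideanSpace ℝ (Fin N) →L[ℝ] EuclideanSpace ℝ (Fin N) :=
  (Matrix.toEuclideanLin (Matrix.diagonal fun j => if j = i then 1 else δ)).toContinuousLinearMap

theorem squeeze_apply (x : EuclideanSpace ℝ (Fin N)) (j : Fin N) :
    squeeze i δ x j = (if j = i then 1 else δ) * x j := by
  simp [squeeze, Matrix.toLpLin_apply, Matrix.mulVec_diagonal]

theorem squeeze_single (s : ℝ) :
    squeeze i δ (EuclideanSpace.single i s) = EuclideanSpace.single i s := by
  ext j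
  rw [squeeze_apply]
  by_cases h : j = i <;> simp [h]

theorem det_squeeze : (squeeze i δ).det = δ ^ (N - 1) := by
  change LinearMap.det (Matrix.toEuclideanLin _) = _
  rw [LinearMap.det_toLpLin, Matrix.det_diagonal, Finset.prod_ite]
  simp [Finset.filter_ne', Finset.card_erase_of_mem]

theorem norm_squeeze_le (hδ : |δ| ≤ 1) (x : EuclideanSpace ℝ (Fin N)) :
    ‖squeeze i δ x‖ ≤ ‖x‖ := by
  rw [EuclideanSpace.norm_eq, EuclideanSpace.norm_eq]
  refine Real.sqrt_le_sqrt (Finset.sum_le_sum fun j _ => ?_)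
  rw [squeeze_apply, norm_mul]
  gcongr
  refine mul_le_of_le_one_left (norm_nonneg _) ?_
  split_ifs
  · exact norm_one.le
  · exact hδ

/-- The ellipsoid with semi-axis `r` in the direction of the `i`-th coordinate and semi-axes
`|δ| * r` in all the others. -/
def squeezedBall (i : Fin N) (δ r : ℝ) : Set (EuclideanSpace ℝ (Fin N)) :=
  squeeze i δ '' ball 0 r

theorem isOpen_squeezedBall (hδ : δ ≠ 0) : IsOpen (squeezedBall i δ r) := by
  have det_ne : (squeeze i δ).det ≠ 0 := det_squeeze.trans_ne (pow_ne_zero _ hδ)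
  exact ((squeeze i δ).toContinuousLinearEquivOfDetNeZero det_ne).toHomeomorph.isOpenMap _
    isOpen_ball

theorem convex_squeezedBall : Convex ℝ (squeezedBall i δ r) :=
  (convex_ball 0 r).linear_image (squeeze i δ).toLinearMap

theorem neg_preimage_squeezedBall : Neg.neg ⁻¹' squeezedBall i δ r = squeezedBall i δ r := by
  have neg_mem {x : EuclideanSpace ℝ (Fin N)} (hx : x ∈ squeezedBall i δ r) :
      -x ∈ squeezedBall i δ r := by
    obtain ⟨y, hy, rfl⟩ := hx
    exact ⟨-y, by simpa using hy, map_neg _ _⟩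
  exact Subset.antisymm (fun x hx => neg_neg x ▸ neg_mem hx) fun x hx => neg_mem hx

theorem squeezedBall_subset_ball (hδ : |δ| ≤ 1) : squeezedBall i δ r ⊆ ball 0 r := by
  rintro _ ⟨x, hx, rfl⟩
  rw [mem_ball_zero_iff] at hx ⊢
  exact (norm_squeeze_le hδ x).trans_lt hx

theorem isBounded_squeezedBall (hδ : |δ| ≤ 1) : Bornology.IsBounded (squeezedBall i δ r) :=
  isBounded_ball.subset (squeezedBall_subset_ball hδ)

theorem single_mem_squeezedBall {s : ℝ} (hs : |s| < r) :
    EuclideanSpace.single i s ∈ squeezedBall i δ r :=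
  ⟨EuclideanSpace.single i s, by simpa using hs, squeeze_single s⟩

theorem diam_squeezedBall (hδ : |δ| ≤ 1) (hr : 0 ≤ r) : diam (squeezedBall i δ r) = 2 * r := by
  refine le_antisymm ((diam_mono (squeezedBall_subset_ball hδ) isBounded_ball).trans
    (diam_ball hr)) ?_
  have isometry_single : Isometry fun s : ℝ => EuclideanSpace.single i s :=
    Isometry.of_dist_eq fun s t => PiLp.dist_single_same ..
  have axis_subset : (fun s : ℝ => EuclideanSpace.single i s) '' ball 0 r ⊆ squeezedBall i δ r :=
    image_subset_iff.2 fun s hs => single_mem_squeezedBall (mem_ball_zero_iff.1 hs)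
  calc 2 * r = diam ((fun s : ℝ => EuclideanSpace.single i s) '' ball 0 r) := by
        rw [isometry_single.diam_image, diam_ball_eq _ hr]
    _ ≤ diam (squeezedBall i δ r) := diam_mono axis_subset (isBounded_squeezedBall hδ)

theorem isNeumannCompetitor_squeezedBall (hr : 0 < r) :
    IsNeumannCompetitor q (squeezedBall i δ r)
      (EuclideanSpace.proj i : EuclideanSpace ℝ (Fin N) →L[ℝ] ℝ) := by
  refine isNeumannCompetitor_continuousLinearMap neg_preimage_squeezedBall
    ⟨EuclideanSpace.single i (r / 2), single_mem_squeezedBall ?_, ?_⟩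
  · rw [abs_of_pos (half_pos hr)]
    exact half_lt_self hr
  · simpa using hr.ne'

theorem rayleighQuot_squeezedBall (hδ : δ ≠ 0) :
    rayleighQuot p q (squeezedBall i δ r)
        (EuclideanSpace.proj i : EuclideanSpace ℝ (Fin N) →L[ℝ] ℝ) =
      (|δ| ^ (N - 1)) ^ (1 - p / q) * rayleighQuot p q (ball 0 r)
        (EuclideanSpace.proj i : EuclideanSpace ℝ (Fin N) →L[ℝ] ℝ) := by
  have det_ne : (squeeze i δ).det ≠ 0 := det_squeeze.trans_ne (pow_ne_zero _ hδ)
  rw [squeezedBall, rayleighQuot_image_continuousLinearMap det_ne _ measurableSet_ball,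
    det_squeeze, abs_pow]
  intro x
  simp [squeeze_apply]

theorem tendsto_rayleighQuot_squeezedBall (hN : 2 ≤ N) (hq : 0 < q) (hpq : p < q) :
    Tendsto (fun δ => rayleighQuot p q (squeezedBall i δ r)
        (EuclideanSpace.proj i : EuclideanSpace ℝ (Fin N) →L[ℝ] ℝ)) (𝓝[≠] 0) (𝓝 0) := by
  have exponent_pos : 0 < 1 - p / q := sub_pos.2 ((div_lt_one hq).2 hpq)
  have factor_cont : Continuous fun δ : ℝ => (|δ| ^ (N - 1)) ^ (1 - p / q) :=
    (continuous_abs.pow _).rpow_const fun _ => Or.inr exponent_pos.le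
  have limit := ((factor_cont.mul_const (rayleighQuot p q (ball 0 r)
    (EuclideanSpace.proj i : EuclideanSpace ℝ (Fin N) →L[ℝ] ℝ))).tendsto 0).mono_left
      (nhdsWithin_le_nhds (s := {0}ᶜ))
  rw [abs_zero, zero_pow (by omega), Real.zero_rpow exponent_pos.ne', zero_mul] at limit
  refine limit.congr' ?_
  filter_upwards [self_mem_nhdsWithin] with δ hδ
  exact (rayleighQuot_squeezedBall hδ).symm

end SqueezedBall

theorem inf_muPQ_diam_eq_zero_general {N : ℕ} (hN : 2 ≤ N) (p q : ℝ) (hp : 1 ≤ p)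
    (hpq : p < q) (hq : ltCritical N p q) (c : ℝ) (hc : 0 < c) :
    (∀ Ω : Set (EuclideanSpace ℝ (Fin N)), 0 ≤ muPQ p q Ω) ∧
    ∀ ε : ℝ, 0 < ε → ∃ Ω : Set (EuclideanSpace ℝ (Fin N)),
      IsOpen Ω ∧ Bornology.IsBounded Ω ∧ Convex ℝ Ω ∧ Ω.Nonempty ∧
      diam Ω = c ∧ 0 < muPQ p q Ω ∧ muPQ p q Ω < ε := by
  have hp_pos : 0 < p := by linarith
  have hq_pos : 0 < q := by linarith
  refine ⟨fun Ω => muPQ_nonneg, fun ε hε => ?_⟩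
  let i : Fin N := ⟨0, by omega⟩
  have small : ∀ᶠ δ in 𝓝[>] (0 : ℝ), rayleighQuot p q (squeezedBall i δ (c / 2))
      (EuclideanSpace.proj i : EuclideanSpace ℝ (Fin N) →L[ℝ] ℝ) < ε :=
    ((tendsto_rayleighQuot_squeezedBall hN hq_pos hpq).mono_left
      (nhdsGT_le_nhdsNE 0)).eventually_lt_const hε
  obtain ⟨δ, hlt, hδ_pos, hδ_one⟩ := (small.and (Ioo_mem_nhdsGT one_pos)).exists
  have hδ : |δ| ≤ 1 := (abs_of_pos hδ_pos).trans_le hδ_one.le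
  have competitor := isNeumannCompetitor_squeezedBall (q := q) (i := i) (δ := δ) (half_pos hc)
  have hopen : IsOpen (squeezedBall i δ (c / 2)) := isOpen_squeezedBall hδ_pos.ne'
  refine ⟨squeezedBall i δ (c / 2), hopen, isBounded_squeezedBall hδ, convex_squeezedBall,
    ⟨_, single_mem_squeezedBall (s := 0) (by simpa using hc)⟩, ?_, ?_, ?_⟩
  · rw [diam_squeezedBall hδ (half_pos hc).le, mul_div_cancel₀ c two_ne_zero]
  · exact muPQ_pos hopen convex_squeezedBall (isBounded_squeezedBall hδ) hp hpq
      (hq.mul_inv_sub_inv_lt_one hp_pos hq_pos) competitor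
  · exact (muPQ_le_rayleighQuot competitor).trans_lt hlt

/-- Remark 4.5. Let `1 < p < q < p*`. For every `c > 0`, the infimum
of `μ_{p,q}(Ω)` over open bounded convex sets `Ω ⊂ ℝ^N` with `diam Ω ≤ c` equals `0`:
the quantity is always nonnegative, and for every `ε > 0` there is an open bounded
convex set `Ω` with `diam Ω = c` and `0 < μ_{p,q}(Ω) < ε`. -/
theorem inf_muPQ_diam_eq_zero {N : ℕ} (hN : 2 ≤ N) (p q : ℝ) (hp : 1 < p)
    (hpq : p < q) (hq : ltCritical N p q) (c : ℝ) (hc : 0 < c) :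
    (∀ Ω : Set (EuclideanSpace ℝ (Fin N)), IsOpen Ω → Bornology.IsBounded Ω →
      Convex ℝ Ω → Ω.Nonempty → diam Ω ≤ c → 0 ≤ muPQ p q Ω) ∧
    ∀ ε : ℝ, 0 < ε → ∃ Ω : Set (EuclideanSpace ℝ (Fin N)),
      IsOpen Ω ∧ Bornology.IsBounded Ω ∧ Convex ℝ Ω ∧ Ω.Nonempty ∧
      diam Ω = c ∧ 0 < muPQ p q Ω ∧ muPQ p q Ω < ε := by
  obtain ⟨nonneg, exists_lt⟩ := inf_muPQ_diam_eq_zero_general hN p q hp.le hpq hq c hc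
  exact ⟨fun Ω _ _ _ _ _ => nonneg Ω, exists_lt⟩
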